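/- Let L : ℝ × ℝ^n × ℝ^n → ℝ, written L(T,q,u), be smooth; let T : ℝ → ℝ be a smooth diffeomorphism with Ṫ(t) ≠ 0 for all t, and q : ℝ → ℝ^n smooth. Define the reparametrized Lagrangian along (T,q) by L̃(t) := L(T(t), q(t), q̇(t)/Ṫ(t))·Ṫ(t). Then the Euler–Lagrange equations of L̃ with respect to q, namely (∂L/∂q^A)(T(t),q(t),q̇(t)/Ṫ(t))·Ṫ(t) − (d/dt)[(∂L/∂u^A)(T(t),q(t),q̇(t)/Ṫ(t))] = 0 for all A and all t ∈ ℝ, hold if and only if r := q∘T⁻¹ satisfies the Euler–Lagrange equations of L: (∂L/∂q^A)(s, r(s), r′(s)) − (d/ds)[(∂L/∂u^A)(s, r(s), r′(s))] = 0 for all A and all s ∈ ℝ. -/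

import Mathlib

noncomputable section

/-!
Put `r = q ∘ T⁻¹`, so that `q = r ∘ T`. By the chain rule `q̇ / Ṫ = r′ ∘ T`, hence both `∂L/∂q` and
the momentum `∂L/∂u` along `(T, q, q̇ / Ṫ)` are the corresponding quantities along `(s, r, r′)`
composed with `T`. A second use of the chain rule, now on the momentum, shows that the two
Euler–Lagrange expressions differ by the factor `Ṫ`, which never vanishes.
-/

section ReparametrizedMechanics

variable {E : Type*} [NormedAddCommGroup E] [NormedSpace ℝ E]

/-- The first jet prolongation `s ↦ (s, r s, r′ s)` of a curve `r`, at which a time-dependent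
Lagrangian is evaluated. -/
def jetProlongation (r : ℝ → E) (s : ℝ) : ℝ × E × E :=
  (s, r s, deriv r s)

/-- The prolongation `t ↦ (T t, q t, q̇ t / Ṫ t)` of a curve `q` whose time is measured by the
covariance field `T`. Where `Ṫ t = 0` the velocity is the junk value `0`. -/
def reparamJetProlongation (T : ℝ → ℝ) (q : ℝ → E) (t : ℝ) : ℝ × E × E :=
  (T t, q t, (deriv T t)⁻¹ • deriv q t)

/-- The Euler–Lagrange expression `∂L/∂q - d/ds (∂L/∂u)` of `L` along `r`, paired with a constant
variation `v`; basis vectors `v` give its components. -/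
def eulerLagrange (L : ℝ × E × E → ℝ) (r : ℝ → E) (v : E) (s : ℝ) : ℝ :=
  fderiv ℝ L (jetProlongation r s) (0, v, 0)
    - deriv (fun s' => fderiv ℝ L (jetProlongation r s') (0, 0, v)) s

/-- The Euler–Lagrange expression with respect to `q` of the reparametrized Lagrangian
`L (T, q, q̇ / Ṫ) * Ṫ`, paired with a constant variation `v`. The momentum term carries no `Ṫ`,
because differentiating `q̇ / Ṫ` in `q̇` cancels that factor. -/
def reparamEulerLagrange (L : ℝ × E × E → ℝ) (T : ℝ → ℝ) (q : ℝ → E) (v : E) (t : ℝ) : ℝ :=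
  fderiv ℝ L (reparamJetProlongation T q t) (0, v, 0) * deriv T t
    - deriv (fun t' => fderiv ℝ L (reparamJetProlongation T q t') (0, 0, v)) t

theorem differentiable_jetProlongation {r : ℝ → E} (hr : ContDiff ℝ 2 r) :
    Differentiable ℝ (jetProlongation r) :=
  differentiable_id.prodMk ((hr.differentiable two_ne_zero).prodMk hr.differentiable_deriv_two)

theorem differentiable_fderiv_jetProlongation_apply {L : ℝ × E × E → ℝ} (hL : ContDiff ℝ 2 L)
    {r : ℝ → E} (hr : ContDiff ℝ 2 r) (w : ℝ × E × E) :
    Differentiable ℝ fun s => fderiv ℝ L (jetProlongation r s) w :=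
  have hdL : Differentiable ℝ (fderiv ℝ L) :=
    (hL.fderiv_right (m := 1) one_add_one_eq_two.le).differentiable one_ne_zero
  (hdL.comp (differentiable_jetProlongation hr)).clm_apply (differentiable_const w)

theorem reparamJetProlongation_comp {T : ℝ → ℝ} {r : ℝ → E} {t : ℝ}
    (hr : DifferentiableAt ℝ r (T t)) (hT : deriv T t ≠ 0) :
    reparamJetProlongation T (r ∘ T) t = jetProlongation r (T t) := by
  have chain_rule : deriv (r ∘ T) t = deriv T t • deriv r (T t) :=
    deriv.scomp t hr (differentiableAt_of_deriv_ne_zero hT)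
  rw [reparamJetProlongation, chain_rule, inv_smul_smul₀ hT, Function.comp_apply, jetProlongation]

theorem reparamEulerLagrange_comp {L : ℝ × E × E → ℝ} (hL : ContDiff ℝ 2 L) {T : ℝ → ℝ}
    (hT : ∀ t, deriv T t ≠ 0) {r : ℝ → E} (hr : ContDiff ℝ 2 r) (v : E) (t : ℝ) :
    reparamEulerLagrange L T (r ∘ T) v t = eulerLagrange L r v (T t) * deriv T t := by
  have jet_eq (t' : ℝ) : reparamJetProlongation T (r ∘ T) t' = jetProlongation r (T t') :=
    reparamJetProlongation_comp (hr.differentiable two_ne_zero _) (hT t')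
  have deriv_momentum :
      deriv (fun t' => fderiv ℝ L (jetProlongation r (T t')) (0, 0, v)) t =
        deriv (fun s => fderiv ℝ L (jetProlongation r s) (0, 0, v)) (T t) * deriv T t :=
    deriv_comp t (differentiable_fderiv_jetProlongation_apply hL hr (0, 0, v) (T t))
      (differentiableAt_of_deriv_ne_zero (hT t))
  simp only [reparamEulerLagrange, eulerLagrange, jet_eq]
  rw [deriv_momentum, sub_mul]

theorem stmt_7_general {L : ℝ × E × E → ℝ} (hL : ContDiff ℝ 2 L) {T : ℝ → ℝ}
    (hT_surj : Function.Surjective T) (hT : ∀ t, deriv T t ≠ 0) {r : ℝ → E}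
    (hr : ContDiff ℝ 2 r) (v : E) :
    (∀ t, reparamEulerLagrange L T (r ∘ T) v t = 0) ↔ ∀ s, eulerLagrange L r v s = 0 := by
  simp only [reparamEulerLagrange_comp hL hT hr, mul_eq_zero, hT, or_false]
  exact (hT_surj.forall (p := fun s => eulerLagrange L r v s = 0)).symm

end ReparametrizedMechanics

/-- the Euler–Lagrange equations of the reparametrized mechanics Lagrangian
`L̃(t) = L(T(t), q(t), q̇(t)/Ṫ(t))·Ṫ(t)` with respect to `q` hold iff `r := q ∘ T⁻¹`
satisfies the Euler–Lagrange equations of `L`. -/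
theorem stmt_7 {n : ℕ}
    (L : ℝ × (Fin n → ℝ) × (Fin n → ℝ) → ℝ) (hL : ContDiff ℝ (⊤ : ℕ∞) L)
    (T Tinv : ℝ → ℝ) (hT : ContDiff ℝ (⊤ : ℕ∞) T) (hTinv : ContDiff ℝ (⊤ : ℕ∞) Tinv)
    (hT1 : Function.LeftInverse Tinv T) (hT2 : Function.RightInverse Tinv T)
    (hT' : ∀ t : ℝ, deriv T t ≠ 0)
    (q : ℝ → (Fin n → ℝ)) (hq : ContDiff ℝ (⊤ : ℕ∞) q) :
    (∀ (A : Fin n) (t : ℝ),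
        fderiv ℝ L (T t, q t, fun B => deriv q t B / deriv T t) (0, Pi.single A 1, 0)
            * deriv T t
          - deriv (fun t' =>
              fderiv ℝ L (T t', q t', fun B => deriv q t' B / deriv T t')
                (0, 0, Pi.single A 1)) t = 0)
      ↔
    (∀ (A : Fin n) (s : ℝ),
        fderiv ℝ L (s, (q ∘ Tinv) s, deriv (q ∘ Tinv) s) (0, Pi.single A 1, 0)
          - deriv (fun s' =>
              fderiv ℝ L (s', (q ∘ Tinv) s', deriv (q ∘ Tinv) s')
                (0, 0, Pi.single A 1)) s = 0) := by
  have hr : ContDiff ℝ 2 (q ∘ Tinv) := (hq.comp hTinv).of_le (by norm_cast)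
  have hrT : (q ∘ Tinv) ∘ T = q := by rw [Function.comp_assoc, hT1.comp_eq_id, Function.comp_id]
  have velocity_eq (t : ℝ) :
      (fun B => deriv q t B / deriv T t) = (deriv T t)⁻¹ • deriv q t :=
    funext fun _ => div_eq_inv_mul _ _
  simp only [velocity_eq]
  refine forall_congr' fun A => ?_
  have h := stmt_7_general (hL.of_le (by norm_cast)) hT2.surjective hT' hr (Pi.single A 1)
  rwa [hrT] at h
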